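/- Suppose that u and v are both quasi-continuous functions on P. If u = v μ-almost everywhere, then u = v quasi-everywhere, i.e., C_X({x ∈ P : u(x) ≠ v(x)}) = 0. -/

import Mathlib

/-!
Given `ε > 0`, choose an open set `U` of small capacity off which both `u` and `v` are continuous.
Then `V = {u ≠ v} ∪ U` is open, because its complement is the coincidence set of two functions
continuous on the closed set `Uᶜ`. It remains to see that `V` has small capacity as well, although
`V` and `U` differ by a null set only.

This is the key point (`isUpperGradient_modify`): let `w` have upper gradient `g` and satisfy
`w ≥ 1` on an open set `G` up to a null set `N`. Replacing `w` by `max w 1` on `G` changes `w` on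
a null set only, and `g + ∞ · 1_N` is an upper gradient of the new function. Indeed, a curve along
which this gradient has finite integral spends no time in `N`; if it starts in `G`, then `w ≥ 1`
at almost every early time, and since the integral of `g` over short initial pieces tends to `0`,
already `w ≥ 1` at the starting point (`one_le_start`). So the modification does not affect
the end points of such a curve. By the lattice property the norms of function and gradient are
unchanged, hence every test function for `U` yields one for `V` of the same norm.

The set `U` is the union of the exceptional sets of `u` and `v`; its test function is the maximum
of the two given ones, controlled by the quasi-triangle inequality.
-/

open MeasureTheory Filter Set Topology Metric ENNReal

noncomputable section

/-- A (non-constant, rectifiable) curve in `P`, parametrized by arc length. -/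
structure Curve (P : Type*) [PseudoMetricSpace P] where
  len : ℝ
  len_pos : 0 < len
  toFun : ℝ → P
  lip : LipschitzOnWith 1 toFun (Set.Icc 0 len)

variable {P : Type*}

/-- The curve integral `∫_γ ρ ds`. -/
def curveLint [PseudoMetricSpace P] (γ : Curve P) (ρ : P → ℝ≥0∞) : ℝ≥0∞ :=
  ∫⁻ t in Set.Icc (0 : ℝ) γ.len, ρ (γ.toFun t)

/-- `g` is an upper gradient of `u`. -/
def IsUpperGradient [PseudoMetricSpace P] [MeasurableSpace P]
    (u : P → EReal) (g : P → ℝ≥0∞) : Prop :=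
  Measurable g ∧
    ∀ γ : Curve P, (u (γ.toFun 0) - u (γ.toFun γ.len)).abs ≤ curveLint γ g

/-- A quasi-Banach function lattice over `(P, μ)` with continuous quasi-norm. -/
structure QBFL (P : Type*) [MeasurableSpace P] (μ : MeasureTheory.Measure P) where
  nrm : (P → EReal) → ℝ≥0∞
  cc : ℝ≥0∞
  one_le_cc : 1 ≤ cc
  cc_lt_top : cc < ⊤
  nrm_eq_zero_iff : ∀ u : P → EReal, Measurable u → (nrm u = 0 ↔ u =ᵐ[μ] 0)
  nrm_smul : ∀ (a : ℝ) (u : P → EReal),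
    nrm (fun x => (a : EReal) * u x) = ENNReal.ofReal |a| * nrm u
  nrm_triangle : ∀ u v : P → EReal,
    nrm (fun x => u x + v x) ≤ cc * (nrm u + nrm v)
  nrm_mono : ∀ u v : P → EReal, (∀ᵐ x ∂μ, (u x).abs ≤ (v x).abs) → nrm u ≤ nrm v
  nrm_rieszFischer : ∀ f : ℕ → P → EReal, (∀ n, ∀ᵐ x ∂μ, 0 ≤ f n x) →
    nrm (fun x => ∑' n, f n x) ≤ ∑' n, cc ^ (n + 1) * nrm (f n)
  nrm_continuous : ∀ (f : ℕ → P → EReal) (u : P → EReal),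
    Tendsto (fun n => nrm fun x => f n x - u x) atTop (𝓝 0) →
    Tendsto (fun n => nrm (f n)) atTop (𝓝 (nrm u))

variable [MetricSpace P] [MeasurableSpace P] {μ : MeasureTheory.Measure P}

/-- The quasi-norm applied to a `ℝ≥0∞`-valued function. -/
def QBFL.nrmE (X : QBFL P μ) (g : P → ℝ≥0∞) : ℝ≥0∞ :=
  X.nrm fun x => (g x : EReal)

/-- The Newtonian quasi-seminorm `‖u‖_{N¹X}`. -/
def QBFL.newt (X : QBFL P μ) (u : P → EReal) : ℝ≥0∞ :=
  X.nrm u + ⨅ g ∈ {g : P → ℝ≥0∞ | IsUpperGradient u g}, X.nrmE g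

/-- Membership in the Newtonian space `N¹X`. -/
def QBFL.memN1 (X : QBFL P μ) (u : P → EReal) : Prop :=
  Measurable u ∧ X.newt u < ⊤

/-- The Sobolev capacity `C_X`. -/
def QBFL.cap (X : QBFL P μ) (E : Set P) : ℝ≥0∞ :=
  ⨅ u ∈ {u : P → EReal | X.memN1 u ∧ ∀ x ∈ E, 1 ≤ u x}, X.newt u


/-- `u` is weakly quasi-continuous: for every `ε > 0` there is a set `E` of capacity
less than `ε` such that the restriction of `u` to the complement of `E` is finite
and continuous. -/
def QBFL.WeaklyQC (X : QBFL P μ) (u : P → EReal) : Prop :=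
  ∀ ε : ℝ≥0∞, 0 < ε → ∃ E : Set P, X.cap E < ε ∧
    (∀ x ∈ Eᶜ, u x ≠ ⊤ ∧ u x ≠ ⊥) ∧ ContinuousOn u Eᶜ

/-- `u` is quasi-continuous: the exceptional set can moreover be chosen open. -/
def QBFL.QC (X : QBFL P μ) (u : P → EReal) : Prop :=
  ∀ ε : ℝ≥0∞, 0 < ε → ∃ E : Set P, IsOpen E ∧ X.cap E < ε ∧
    (∀ x ∈ Eᶜ, u x ≠ ⊤ ∧ u x ≠ ⊥) ∧ ContinuousOn u Eᶜ

/-! ### Curves -/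

/-- The initial piece `γ|_[0,s]` of a curve. -/
def Curve.initial {P : Type*} [PseudoMetricSpace P] (γ : Curve P) (s : ℝ) (hs : 0 < s)
    (hs' : s ≤ γ.len) : Curve P where
  len := s
  len_pos := hs
  toFun := γ.toFun
  lip := γ.lip.mono (Icc_subset_Icc_right hs')

/-- The curve traversed backwards. -/
def Curve.rev {P : Type*} [PseudoMetricSpace P] (γ : Curve P) : Curve P where
  len := γ.len
  len_pos := γ.len_pos
  toFun := fun t => γ.toFun (γ.len - t)
  lip := by
    intro x hx y hy
    have h := γ.lip (x := γ.len - x) ⟨by linarith [hx.2], by linarith [hx.1]⟩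
      (y := γ.len - y) ⟨by linarith [hy.2], by linarith [hy.1]⟩
    simpa [edist_sub_left] using h

lemma curveLint_rev {P : Type*} [PseudoMetricSpace P] (γ : Curve P) (ρ : P → ℝ≥0∞) :
    curveLint γ.rev ρ = curveLint γ ρ := by
  unfold curveLint
  have hmp : MeasurePreserving (fun t : ℝ => γ.len - t) volume volume :=
    Measure.measurePreserving_sub_left volume γ.len
  have hemb : MeasurableEmbedding (fun t : ℝ => γ.len - t) :=
    (MeasurableEquiv.subLeft γ.len).measurableEmbedding
  have h := hmp.setLIntegral_comp_preimage_emb hemb (fun t => ρ (γ.toFun t)) (Icc 0 γ.len)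
  rw [← h]
  have : (fun t : ℝ => γ.len - t) ⁻¹' Icc 0 γ.len = Icc 0 γ.len := by
    ext t
    simp only [mem_preimage, mem_Icc]
    constructor <;> rintro ⟨h1, h2⟩ <;> constructor <;> linarith
  rw [this]
  rfl

lemma curve_aemeasurable {P : Type*} [PseudoMetricSpace P] [MeasurableSpace P] [BorelSpace P]
    (γ : Curve P) {g : P → ℝ≥0∞} (hg : Measurable g) :
    AEMeasurable (fun t => g (γ.toFun t)) (volume.restrict (Icc 0 γ.len)) :=
  hg.comp_aemeasurable (γ.lip.continuousOn.aemeasurable measurableSet_Icc)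

/-! ### Extended real arithmetic -/

lemma exists_pos_le_abs_sub {a : EReal} (ha : a < 1) :
    ∃ c : ℝ≥0∞, 0 < c ∧ ∀ b : EReal, 1 ≤ b → c ≤ (a - b).abs := by
  induction a with
  | bot => exact ⟨⊤, by simp, fun b _ => by simp [sub_eq_add_neg]⟩
  | top => simp at ha
  | coe a =>
    have ha' : a < 1 := by exact_mod_cast ha
    refine ⟨ENNReal.ofReal (1 - a), by simpa using ha', fun b hb => ?_⟩
    induction b with
    | bot => exact absurd hb (not_le.2 (EReal.bot_lt_coe 1))
    | top => simp [sub_eq_add_neg]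
    | coe b =>
      have hb' : 1 ≤ b := by exact_mod_cast hb
      rw [← EReal.coe_sub, EReal.abs_def]
      apply ENNReal.ofReal_le_ofReal
      rw [abs_of_nonpos (by linarith)]
      linarith

lemma abs_max_sub_max_le (a b a' b' : EReal) :
    (max a b - max a' b').abs ≤ (a - a').abs + (b - b').abs := by
  -- if one of the four values is infinite, the right-hand side is `⊤`
  induction a with
  | bot => simp [sub_eq_add_neg]
  | top => induction a' <;> simp [sub_eq_add_neg]
  | coe a =>
  induction a' with
  | bot => simp [sub_eq_add_neg]
  | top => simp [sub_eq_add_neg]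
  | coe a' =>
  induction b with
  | bot => simp [sub_eq_add_neg]
  | top => induction b' <;> simp [sub_eq_add_neg]
  | coe b =>
  induction b' with
  | bot => simp [sub_eq_add_neg]
  | top => simp [sub_eq_add_neg]
  | coe b' =>
    rw [← EReal.coe_strictMono.monotone.map_max, ← EReal.coe_strictMono.monotone.map_max,
      ← EReal.coe_sub, ← EReal.coe_sub, ← EReal.coe_sub, EReal.abs_def, EReal.abs_def,
      EReal.abs_def, ← ENNReal.ofReal_add (abs_nonneg _) (abs_nonneg _)]
    apply ENNReal.ofReal_le_ofReal
    exact (abs_max_sub_max_le_max a b a' b').trans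
      (max_le_add_of_nonneg (abs_nonneg _) (abs_nonneg _))

lemma ereal_abs_coe_ennreal (a : ℝ≥0∞) : (a : EReal).abs = a := by
  induction a with
  | top => simp
  | coe a =>
    have : (((a : ℝ≥0∞) : EReal)) = ((a : ℝ) : EReal) := rfl
    rw [this, EReal.abs_def, abs_of_nonneg (NNReal.coe_nonneg a)]
    exact ENNReal.ofReal_coe_nnreal

/-! ### Modification on an open set up to a null set -/

section

variable {P : Type*} [MetricSpace P] [MeasurableSpace P] [BorelSpace P]

/-- Along a curve that spends almost no time in `N` and has finite `g`-length, the bound `w ≥ 1`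
on `G \ N` propagates to the starting point, if that lies in the open set `G`. -/
lemma one_le_start {w : P → EReal} {g : P → ℝ≥0∞} (hg : IsUpperGradient w g)
    {G N : Set P} (hG : IsOpen G) (hw : ∀ x ∈ G, x ∉ N → 1 ≤ w x)
    (γ : Curve P) (hfin : curveLint γ g ≠ ⊤)
    (hN : ∀ᵐ t ∂(volume.restrict (Icc (0 : ℝ) γ.len)), γ.toFun t ∉ N)
    (h0 : γ.toFun 0 ∈ G) : 1 ≤ w (γ.toFun 0) := by
  by_contra! hlt
  obtain ⟨c, hc, hcb⟩ := exists_pos_le_abs_sub hlt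
  -- the integral of `g` over short initial pieces is below `c`
  obtain ⟨δ, hδ, hδc⟩ := exists_pos_setLIntegral_lt_of_measure_lt hfin hc.ne'
  -- early points of the curve stay in `G`
  have hcont : ContinuousWithinAt γ.toFun (Icc 0 γ.len) 0 :=
    γ.lip.continuousOn 0 ⟨le_rfl, γ.len_pos.le⟩
  have hnear : ∀ᶠ t in 𝓝[Icc 0 γ.len] (0 : ℝ), γ.toFun t ∈ G :=
    hcont.eventually (hG.mem_nhds h0)
  obtain ⟨r, hr, hrG⟩ := Metric.mem_nhdsWithin_iff.1 hnear
  obtain ⟨d, hd0, hdδ⟩ : ∃ d : ℝ, 0 < d ∧ ENNReal.ofReal d < δ := by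
    obtain ⟨q, hq0, hq⟩ := ENNReal.lt_iff_exists_nnreal_btwn.1 hδ
    exact ⟨q, by exact_mod_cast hq0, by simpa using hq⟩
  set s : ℝ := min (min (r / 2) γ.len) d with hs
  have hs0 : 0 < s := lt_min (lt_min (half_pos hr) γ.len_pos) hd0
  have hsl : s ≤ γ.len := (min_le_left _ _).trans (min_le_right _ _)
  have hsr : s < r := lt_of_le_of_lt ((min_le_left _ _).trans (min_le_left _ _)) (half_lt_self hr)
  have hsd : s ≤ d := min_le_right _ _
  -- a time `t ∈ (0, s]` at which the curve avoids `N`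
  have hex : ∃ t ∈ Ioc 0 s, γ.toFun t ∉ N := by
    by_contra! hall
    have hsub : Ioc 0 s ⊆ Icc 0 γ.len := fun t ht => ⟨ht.1.le, ht.2.trans hsl⟩
    have h1 : ∀ᵐ t ∂(volume.restrict (Ioc 0 s)), γ.toFun t ∉ N :=
      ae_mono (Measure.restrict_mono hsub le_rfl) hN
    have h2 : ∀ᵐ t ∂(volume.restrict (Ioc 0 s)), False := by
      filter_upwards [h1, ae_restrict_mem measurableSet_Ioc] with t ht ht'
      exact ht (hall t ht')
    have h3 : volume.restrict (Ioc 0 s) = 0 :=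
      ae_eq_bot.1 (eventually_false_iff_eq_bot.1 h2)
    rw [Measure.restrict_eq_zero, Real.volume_Ioc] at h3
    simp at h3
    linarith
  obtain ⟨t, ht, htN⟩ := hex
  have htl : t ≤ γ.len := ht.2.trans hsl
  have htG : γ.toFun t ∈ G := by
    refine hrG ⟨?_, ht.1.le, htl⟩
    rw [Metric.mem_ball, Real.dist_eq, sub_zero, abs_of_pos ht.1]
    exact lt_of_le_of_lt ht.2 hsr
  have h1 := hcb _ (hw _ htG htN)
  have h2 := hg.2 (γ.initial t ht.1 htl)
  have h3 : curveLint (γ.initial t ht.1 htl) g < c := by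
    have hv : (volume.restrict (Icc 0 γ.len)) (Icc 0 t) < δ := by
      refine lt_of_le_of_lt (Measure.restrict_apply_le _ _) ?_
      rw [Real.volume_Icc, sub_zero]
      exact lt_of_le_of_lt (ENNReal.ofReal_le_ofReal (ht.2.trans hsd)) hdδ
    have := hδc _ hv
    rwa [Measure.restrict_restrict measurableSet_Icc,
      inter_eq_self_of_subset_left (Icc_subset_Icc_right htl)] at this
  exact absurd (h1.trans h2) (not_le.2 h3)

open Classical in
/-- If `w ≥ 1` on the open set `G` outside the Borel set `N`, then adding `∞ · 1_N` to an upper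
gradient of `w` gives an upper gradient of the function equal to `max w 1` on `G` and to `w`
elsewhere. -/
lemma isUpperGradient_modify {w : P → EReal} {g : P → ℝ≥0∞} (hg : IsUpperGradient w g)
    {G N : Set P} (hG : IsOpen G) (hNm : MeasurableSet N) (hw : ∀ x ∈ G, x ∉ N → 1 ≤ w x) :
    IsUpperGradient (fun x => if x ∈ G then max (w x) 1 else w x)
      (fun x => g x + N.indicator (fun _ => ⊤) x) := by
  have hm : Measurable (fun x => g x + N.indicator (fun _ => (⊤ : ℝ≥0∞)) x) :=
    hg.1.add (measurable_const.indicator hNm)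
  refine ⟨hm, fun γ => ?_⟩
  by_cases hfin : curveLint γ (fun x => g x + N.indicator (fun _ => (⊤ : ℝ≥0∞)) x) = ⊤
  · rw [hfin]
    exact le_top
  have key : ∀ γ : Curve P,
      curveLint γ (fun x => g x + N.indicator (fun _ => (⊤ : ℝ≥0∞)) x) ≠ ⊤ →
      γ.toFun 0 ∈ G → 1 ≤ w (γ.toFun 0) := by
    intro γ hγ h0
    refine one_le_start hg hG hw γ ?_ ?_ h0
    · exact ne_top_of_le_ne_top hγ (lintegral_mono fun t => le_self_add)
    · filter_upwards [ae_lt_top' (curve_aemeasurable γ hm) hγ] with t ht htN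
      simp [htN] at ht
  have hval : ∀ x, (x ∈ G → 1 ≤ w x) → (if x ∈ G then max (w x) 1 else w x) = w x := by
    intro x hx
    split_ifs with h
    · exact max_eq_left (hx h)
    · rfl
  have hend : γ.toFun γ.len ∈ G → 1 ≤ w (γ.toFun γ.len) := by
    have h := key γ.rev (by rwa [curveLint_rev])
    simpa [Curve.rev] using h
  simp only [hval _ (key γ hfin), hval _ hend]
  exact (hg.2 γ).trans (lintegral_mono fun t => le_self_add)

lemma isUpperGradient_max {w₁ w₂ : P → EReal} {g₁ g₂ : P → ℝ≥0∞} (h₁ : IsUpperGradient w₁ g₁)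
    (h₂ : IsUpperGradient w₂ g₂) :
    IsUpperGradient (fun x => max (w₁ x) (w₂ x)) (fun x => g₁ x + g₂ x) := by
  refine ⟨h₁.1.add h₂.1, fun γ => ?_⟩
  refine (abs_max_sub_max_le _ _ _ _).trans ?_
  unfold curveLint
  rw [lintegral_add_left' (curve_aemeasurable γ h₁.1)]
  exact add_le_add (h₁.2 γ) (h₂.2 γ)

/-! ### Capacity -/

variable {μ : MeasureTheory.Measure P} (X : QBFL P μ)

lemma exists_of_cap_lt {E : Set P} {δ : ℝ≥0∞} (h : X.cap E < δ) :
    ∃ (w : P → EReal) (g : P → ℝ≥0∞), Measurable w ∧ (∀ x ∈ E, 1 ≤ w x) ∧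
      IsUpperGradient w g ∧ X.nrm w + X.nrmE g < δ := by
  unfold QBFL.cap at h
  simp only [iInf_lt_iff] at h
  obtain ⟨w, ⟨hw, hwE⟩, hlt⟩ := h
  have hne : X.nrm w ≠ ⊤ := ne_top_of_le_ne_top hw.2.ne le_self_add
  unfold QBFL.newt at hlt
  rw [ENNReal.add_iInf] at hlt
  simp only [iInf_lt_iff] at hlt
  obtain ⟨g, hlt⟩ := hlt
  by_cases hg : g ∈ {g : P → ℝ≥0∞ | IsUpperGradient w g}
  · exact ⟨w, g, hw.1, hwE, hg, by simpa [show IsUpperGradient w g from hg] using hlt⟩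
  · have hg' : ¬ IsUpperGradient w g := hg
    simp [hg'] at hlt

lemma cap_le {E : Set P} {w : P → EReal} {g : P → ℝ≥0∞} (hw : Measurable w)
    (hE : ∀ x ∈ E, 1 ≤ w x) (hg : IsUpperGradient w g) (hfin : X.nrm w + X.nrmE g < ⊤) :
    X.cap E ≤ X.nrm w + X.nrmE g := by
  have h : X.newt w ≤ X.nrm w + X.nrmE g := add_le_add le_rfl (iInf₂_le g hg)
  exact (iInf₂_le w ⟨⟨hw, h.trans_lt hfin⟩, hE⟩).trans h

lemma nrm_max_le (w₁ w₂ : P → EReal) :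
    X.nrm (fun x => max (w₁ x) (w₂ x)) ≤ X.cc * (X.nrm w₁ + X.nrm w₂) := by
  have habs : ∀ w : P → EReal, X.nrm (fun x => ((w x).abs : EReal)) ≤ X.nrm w := fun w =>
    X.nrm_mono _ _ (Eventually.of_forall fun x => by simp [ereal_abs_coe_ennreal])
  calc X.nrm (fun x => max (w₁ x) (w₂ x))
      ≤ X.nrm (fun x => ((w₁ x).abs : EReal) + ((w₂ x).abs : EReal)) := by
        refine X.nrm_mono _ _ (Eventually.of_forall fun x => ?_)
        rw [← EReal.coe_ennreal_add, ereal_abs_coe_ennreal]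
        rcases max_choice (w₁ x) (w₂ x) with h | h <;> rw [h]
        · exact le_self_add
        · exact le_add_self
    _ ≤ _ := X.nrm_triangle _ _
    _ ≤ _ := by gcongr <;> exact habs _

lemma nrmE_add_le (g₁ g₂ : P → ℝ≥0∞) :
    X.nrmE (fun x => g₁ x + g₂ x) ≤ X.cc * (X.nrmE g₁ + X.nrmE g₂) := by
  unfold QBFL.nrmE
  simpa only [EReal.coe_ennreal_add] using
    X.nrm_triangle (fun x => (g₁ x : EReal)) (fun x => (g₂ x : EReal))

open Classical in
/-- A function that is admissible for the open set `G` up to a null set bounds the capacity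
of all of `G`. -/
lemma cap_le_of_null {G N : Set P} {w : P → EReal} {g : P → ℝ≥0∞} (hw : Measurable w)
    (hg : IsUpperGradient w g) (hG : IsOpen G) (hN : μ N = 0)
    (hGN : ∀ x ∈ G, x ∉ N → 1 ≤ w x) (hfin : X.nrm w + X.nrmE g < ⊤) :
    X.cap G ≤ X.nrm w + X.nrmE g := by
  set N' := toMeasurable μ N
  have hN' : ∀ᵐ x ∂μ, x ∉ N' := by
    rw [ae_iff]
    simpa [N', measure_toMeasurable] using hN
  have hGN' : ∀ x ∈ G, x ∉ N' → 1 ≤ w x := fun x hx hxN =>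
    hGN x hx fun h => hxN (subset_toMeasurable μ N h)
  have hug := isUpperGradient_modify hg hG (measurableSet_toMeasurable μ N) hGN'
  have h1 : X.nrm (fun x => if x ∈ G then max (w x) 1 else w x) ≤ X.nrm w := by
    refine X.nrm_mono _ _ ?_
    filter_upwards [hN'] with x hx
    split_ifs with h
    · rw [max_eq_left (hGN' x h hx)]
    · exact le_rfl
  have h2 : X.nrmE (fun x => g x + N'.indicator (fun _ => ⊤) x) ≤ X.nrmE g := by
    refine X.nrm_mono _ _ ?_
    filter_upwards [hN'] with x hx
    simp [hx]
  refine (cap_le X ?_ ?_ hug ((add_le_add h1 h2).trans_lt hfin)).trans (add_le_add h1 h2)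
  · exact Measurable.ite hG.measurableSet (hw.max measurable_const) hw
  · intro x hx
    simp [hx]

end

/-- Two quasi-continuous functions that agree almost everywhere agree
quasi-everywhere. -/
theorem qc_ae_eq_implies_qe_eq
    {P : Type*} [MetricSpace P] [MeasurableSpace P] [BorelSpace P]
    (μ : MeasureTheory.Measure P) [SigmaFinite μ]
    (hball : ∀ (x : P) (r : ℝ), 0 < r → 0 < μ (Metric.ball x r) ∧ μ (Metric.ball x r) < ⊤)
    (X : QBFL P μ)
    (u v : P → EReal) (hu : X.QC u) (hv : X.QC v) (hae : u =ᵐ[μ] v) :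
    X.cap {x | u x ≠ v x} = 0 := by
  by_contra hne
  obtain ⟨ε, hε0, hε⟩ := exists_between (pos_iff_ne_zero.2 hne)
  have hεtop : ε < ⊤ := hε.trans_le le_top
  -- `δ` is chosen so that `cc * (δ + δ) ≤ ε`
  set δ := ε / (X.cc + X.cc) with hδ
  have hδ0 : 0 < δ := ENNReal.div_pos hε0.ne' (ENNReal.add_lt_top.2 ⟨X.cc_lt_top, X.cc_lt_top⟩).ne
  have hδε : X.cc * (δ + δ) ≤ ε := by
    rw [mul_add, ← add_mul]
    exact ENNReal.mul_div_le
  obtain ⟨U₁, hU₁, hc₁, -, hcu⟩ := hu δ hδ0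
  obtain ⟨U₂, hU₂, hc₂, -, hcv⟩ := hv δ hδ0
  obtain ⟨w₁, g₁, hw₁, h1₁, hg₁, hl₁⟩ := exists_of_cap_lt X hc₁
  obtain ⟨w₂, g₂, hw₂, h1₂, hg₂, hl₂⟩ := exists_of_cap_lt X hc₂
  have hnorm : X.nrm (fun x => max (w₁ x) (w₂ x)) + X.nrmE (fun x => g₁ x + g₂ x) ≤ ε := by
    calc _ ≤ X.cc * (X.nrm w₁ + X.nrm w₂) + X.cc * (X.nrmE g₁ + X.nrmE g₂) :=
          add_le_add (nrm_max_le X _ _) (nrmE_add_le X _ _)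
      _ = X.cc * ((X.nrm w₁ + X.nrmE g₁) + (X.nrm w₂ + X.nrmE g₂)) := by ring
      _ ≤ X.cc * (δ + δ) := by gcongr
      _ ≤ ε := hδε
  set V : Set P := {x | u x ≠ v x} ∪ (U₁ ∪ U₂) with hV
  have hVo : IsOpen V := by
    have hK : IsClosed (U₁ ∪ U₂)ᶜ := (hU₁.union hU₂).isClosed_compl
    have hcuv : ContinuousOn (fun x => (u x, v x)) (U₁ ∪ U₂)ᶜ :=
      (hcu.mono (compl_subset_compl.2 subset_union_left)).prodMk
        (hcv.mono (compl_subset_compl.2 subset_union_right))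
    have hcl := hcuv.preimage_isClosed_of_isClosed hK isClosed_diagonal
    rw [← isClosed_compl_iff]
    convert hcl using 1
    ext x
    simp only [hV, mem_compl_iff, mem_union, mem_ofPred_eq, mem_inter_iff, mem_preimage,
      mem_diagonal_iff]
    tauto
  have hcapV : X.cap V ≤ ε := by
    refine (cap_le_of_null X (hw₁.max hw₂) (isUpperGradient_max hg₁ hg₂) hVo
      (N := {x | u x ≠ v x}) (ae_iff.1 hae) ?_ (hnorm.trans_lt hεtop)).trans hnorm
    rintro x (hx | hx | hx) hxN
    · exact absurd hx hxN
    · exact le_max_of_le_left (h1₁ x hx)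
    · exact le_max_of_le_right (h1₂ x hx)
  have hmono : X.cap {x | u x ≠ v x} ≤ X.cap V :=
    le_iInf₂ fun w hw => iInf₂_le w ⟨hw.1, fun x hx => hw.2 x (Or.inl hx)⟩
  exact absurd (hmono.trans hcapV) (not_le.2 hε)

end
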